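/- Let h = a·r₁ + b·r₂ where r₁ is the rank function of U^{123}_{2,3} and r₂ that of U^{124}_{1,3} on N_4, with a, b ≥ 0. Then h is entropic if and only if a = log k for some positive integer k. -/

import Mathlib

open Finset

/-- Probability that the discrete random variable `Y` (on finite sample space `Ω`
with pmf `p`) takes the value `s`. -/
noncomputable def pr {Ω : Type} [Fintype Ω] {S : Type} [DecidableEq S]
    (p : Ω → ℝ) (Y : Ω → S) (s : S) : ℝ := ∑ ω, if Y ω = s then p ω else 0

/-- Shannon entropy (base 2) of the discrete random variable `Y`. -/
noncomputable def ent {Ω : Type} [Fintype Ω] {S : Type} [DecidableEq S]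
    (p : Ω → ℝ) (Y : Ω → S) : ℝ :=
  - ∑ s ∈ Finset.univ.image Y, pr p Y s * Real.logb 2 (pr p Y s)

/-- `h : 2^{N_n} → ℝ` is entropic: it is the entropy function of some random
vector `(X_1, …, X_n)` on finite alphabets. -/
def IsEntropic (n : ℕ) (h : Finset (Fin n) → ℝ) : Prop :=
  ∃ (m : Fin n → ℕ) (p : (∀ i, Fin (m i)) → ℝ),
    (∀ x, 0 ≤ p x) ∧ (∑ x, p x) = 1 ∧
    ∀ A : Finset (Fin n), h A = ent p (fun x (i : A) => x i.1)

/-- Rank function of the matroid U^{B}_{k,|B|} on N₄ = {0,1,2,3}: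
A ↦ min(k, |A ∩ B|); elements outside B are loops. -/
noncomputable def rkU (k : ℕ) (B : Finset (Fin 4)) (A : Finset (Fin 4)) : ℝ :=
  min (k : ℝ) ((A ∩ B).card : ℝ)

/-!
Write `A = {0, 3}`, `B = {1, 3}` and `C = {2}`, so that `H(X_C) = a`. If `h` is entropic,
equality in the submodularity of entropy makes `X_C` independent of `X_A` and of `X_B`, and
`X_A` and `X_B` conditionally independent given `X_{A ∩ B}`, while any two of `X_A`, `X_B`,
`X_C` determine the whole vector. On the support these factorizations combine to
`p(x_C) p(x_{A ∩ B}) = p(x_A)`, so `p(x_C)` is a function of `x_A`. By independence a fixed value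
of `X_A` occurs together with every value of `X_C`, hence `X_C` is uniform on its support and
`a = log k`.

Conversely, entropic functions are closed under addition, by juxtaposing independent random
vectors. The multiple `log k` of the rank function of `U_{2,3}` comes from `(u, v, u + v)` with
`(u, v)` uniform on `(ℤ/k)²`, and the multiple `b` of the rank function of `U_{1,3}` from three
copies of one variable of entropy `b`, which exists because entropy is continuous and connects
`0` to arbitrarily large values.
-/

section Distribution

variable {Ω S T : Type} [Fintype Ω] [DecidableEq S] [DecidableEq T] {p : Ω → ℝ}

theorem pr_nonneg (hp : ∀ ω, 0 ≤ p ω) (Y : Ω → S) (s : S) : 0 ≤ pr p Y s :=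
  sum_nonneg fun ω _ => by split_ifs <;> simp [hp ω]

theorem pr_mono (hp : ∀ ω, 0 ≤ p ω) {Y : Ω → S} {Z : Ω → T} {s : S} {t : T}
    (h : ∀ ω, Y ω = s → Z ω = t) : pr p Y s ≤ pr p Z t := by
  refine sum_le_sum fun ω _ => ?_
  by_cases hω : Y ω = s
  · rw [if_pos hω, if_pos (h ω hω)]
  · rw [if_neg hω]
    split_ifs <;> simp [hp ω]

theorem pr_congr {Y : Ω → S} {Z : Ω → T} {s : S} {t : T} (h : ∀ ω, Y ω = s ↔ Z ω = t) :
    pr p Y s = pr p Z t :=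
  sum_congr rfl fun ω _ => by simp only [h ω]

theorem pr_pos (hp : ∀ ω, 0 ≤ p ω) (Y : Ω → S) {ω : Ω} (hω : 0 < p ω) : 0 < pr p Y (Y ω) :=
  sum_pos' (fun ω' _ => by split_ifs <;> simp [hp ω']) ⟨ω, mem_univ ω, by simpa using hω⟩

theorem exists_pos_of_pr_pos {Y : Ω → S} {s : S} (h : 0 < pr p Y s) : ∃ ω, 0 < p ω ∧ Y ω = s := by
  by_contra! hne
  refine h.not_ge (sum_nonpos fun ω _ => ?_)
  split_ifs with hω
  · exact not_lt.1 fun hpos => hne ω hpos hω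
  · exact le_rfl

theorem sum_pr_mul {Y : Ω → S} {I : Finset S} (hI : ∀ ω, Y ω ∈ I) (f : S → ℝ) :
    ∑ s ∈ I, pr p Y s * f s = ∑ ω, p ω * f (Y ω) := by
  simp only [pr, sum_mul, ite_mul, zero_mul]
  rw [sum_comm]
  exact sum_congr rfl fun ω _ => by rw [sum_ite_eq, if_pos (hI ω)]

theorem sum_pr {Y : Ω → S} {I : Finset S} (hI : ∀ ω, Y ω ∈ I) :
    ∑ s ∈ I, pr p Y s = ∑ ω, p ω := by
  simpa only [mul_one] using sum_pr_mul (p := p) hI fun _ => 1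

theorem sum_pr_prodMk [Fintype S] (Y : Ω → S) (Z : Ω → T) (t : T) :
    ∑ s, pr p (fun ω => (Y ω, Z ω)) (s, t) = pr p Z t := by
  simp only [pr]
  rw [sum_comm]
  exact sum_congr rfl fun ω _ => by simp [ite_and]

theorem pr_mem_stdSimplex [Fintype S] (hp : p ∈ stdSimplex ℝ Ω) (Y : Ω → S) :
    pr p Y ∈ stdSimplex ℝ S :=
  ⟨pr_nonneg hp.1 Y, (sum_pr fun ω => mem_univ (Y ω)).trans hp.2⟩

theorem pr_pr [Fintype S] (Y : Ω → S) (Z : S → T) (t : T) :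
    pr (pr p Y) Z t = pr p (fun ω => Z (Y ω)) t := by
  simpa [pr] using sum_pr_mul (p := p) (fun ω => mem_univ (Y ω)) fun s => if Z s = t then 1 else 0

theorem ent_eq_neg_sum (p : Ω → ℝ) (Y : Ω → S) :
    ent p Y = -∑ ω, p ω * Real.logb 2 (pr p Y (Y ω)) := by
  rw [ent, sum_pr_mul (fun ω => mem_image_of_mem Y (mem_univ ω)) fun s => Real.logb 2 (pr p Y s)]

theorem ent_eq_sum_negMulLog [Fintype S] (p : Ω → ℝ) (Y : Ω → S) :
    ent p Y = (∑ s, Real.negMulLog (pr p Y s)) / Real.log 2 := by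
  rw [ent_eq_neg_sum, ← sum_pr_mul (fun ω => mem_univ (Y ω)) fun s => Real.logb 2 (pr p Y s)]
  simp only [Real.negMulLog, Real.logb, ← mul_div_assoc, ← sum_div, neg_mul, sum_neg_distrib,
    neg_div]

theorem ent_congr {Y : Ω → S} {Z : Ω → T} (h : ∀ ω ω', Y ω = Y ω' ↔ Z ω = Z ω') :
    ent p Y = ent p Z := by
  rw [ent_eq_neg_sum, ent_eq_neg_sum]
  simp only [pr_congr fun ω => h ω _]

theorem ent_pr [Fintype S] (Y : Ω → S) (Z : S → T) :
    ent (pr p Y) Z = ent p fun ω => Z (Y ω) := by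
  rw [ent_eq_neg_sum, ent_eq_neg_sum,
    sum_pr_mul (fun ω => mem_univ (Y ω)) fun s => Real.logb 2 (pr (pr p Y) Z (Z s))]
  simp only [pr_pr]

theorem ent_eq_neg_logb (hp : p ∈ stdSimplex ℝ Ω) {Y : Ω → S} {c : ℝ}
    (hc : ∀ ω, 0 < p ω → pr p Y (Y ω) = c) : ent p Y = -Real.logb 2 c := by
  have hterm : ∀ ω, p ω * Real.logb 2 (pr p Y (Y ω)) = p ω * Real.logb 2 c := fun ω => by
    rcases (hp.1 ω).eq_or_lt with hω | hω
    · rw [← hω, zero_mul, zero_mul]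
    · rw [hc ω hω]
  rw [ent_eq_neg_sum, sum_congr rfl fun ω _ => hterm ω, ← sum_mul, hp.2, one_mul]

theorem ent_eq_zero_of_forall_eq (hp : p ∈ stdSimplex ℝ Ω) {Y : Ω → S}
    (hY : ∀ ω ω', Y ω = Y ω') : ent p Y = 0 := by
  have hone : ∀ ω, pr p Y (Y ω) = 1 := fun ω => by simp [pr, hY _ ω, hp.2]
  rw [ent_eq_neg_logb hp fun ω _ => hone ω, Real.logb_one, neg_zero]

theorem exists_ent_eq_logb_natCast (hp : p ∈ stdSimplex ℝ Ω) {Y : Ω → S} {c : ℝ}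
    (hc : ∀ ω, 0 < p ω → pr p Y (Y ω) = c) : ∃ k : ℕ, 0 < k ∧ ent p Y = Real.logb 2 k := by
  set I : Finset S := {s ∈ univ.image Y | pr p Y s ≠ 0}
  have hI : ∀ s ∈ I, pr p Y s = c := fun s hs => by
    obtain ⟨ω, hω, rfl⟩ := exists_pos_of_pr_pos
      ((pr_nonneg hp.1 Y s).lt_of_ne' (mem_filter.1 hs).2)
    exact hc ω hω
  have hmass : #I * c = 1 := by
    rw [← nsmul_eq_mul, ← sum_const, ← sum_congr rfl hI, sum_filter_ne_zero,
      sum_pr fun ω => mem_image_of_mem Y (mem_univ ω), hp.2]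
  refine ⟨#I, Nat.pos_of_ne_zero fun h => by simp [h] at hmass, ?_⟩
  rw [ent_eq_neg_logb hp hc, eq_inv_of_mul_eq_one_right hmass, Real.logb_inv, neg_neg]

theorem pr_eq_pr_of_ent_eq (hp : ∀ ω, 0 ≤ p ω) {Y : Ω → S} {Z : Ω → T}
    (hYZ : ∀ ω ω', Y ω = Y ω' → Z ω = Z ω') (h : ent p Y = ent p Z) {ω : Ω} (hω : 0 < p ω) :
    pr p Y (Y ω) = pr p Z (Z ω) := by
  rw [ent_eq_neg_sum, ent_eq_neg_sum, neg_inj] at h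
  have hle : ∀ ω ∈ univ,
      p ω * Real.logb 2 (pr p Y (Y ω)) ≤ p ω * Real.logb 2 (pr p Z (Z ω)) := fun ω _ => by
    rcases (hp ω).eq_or_lt with hω | hω
    · rw [← hω, zero_mul, zero_mul]
    · exact mul_le_mul_of_nonneg_left (Real.logb_le_logb_of_le one_lt_two (pr_pos hp Y hω)
        (pr_mono hp fun ω' h' => hYZ ω' ω h')) hω.le
  have hlog := mul_left_cancel₀ hω.ne' ((sum_eq_sum_iff_of_le hle).1 h ω (mem_univ ω))
  exact Real.logb_injOn_pos one_lt_two (pr_pos hp Y hω) (pr_pos hp Z hω) hlog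

end Distribution

section ConditionalIndependence

theorem eq_of_sum_mul_logb_le {ι : Type*} [Fintype ι] {P Q : ι → ℝ} {b : ℝ} (hb : 1 < b)
    (hP : ∀ i, 0 ≤ P i) (hQ : ∀ i, 0 ≤ Q i) (hPQ : ∀ i, Q i = 0 → P i = 0)
    (hsum : ∑ i, Q i ≤ ∑ i, P i)
    (hlog : ∑ i, P i * Real.logb b (P i) ≤ ∑ i, P i * Real.logb b (Q i)) : P = Q := by
  have hlog' : ∑ i, P i * Real.log (P i) ≤ ∑ i, P i * Real.log (Q i) := by
    simpa only [Real.logb, ← mul_div_assoc, ← sum_div,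
      div_le_div_iff_of_pos_right (Real.log_pos hb)] using hlog
  have hterm : ∀ i, Q i * InformationTheory.klFun (P i / Q i) =
      P i * Real.log (P i) - P i * Real.log (Q i) + (Q i - P i) := fun i => by
    by_cases hQi : Q i = 0
    · simp [hQi, hPQ i hQi]
    by_cases hPi : P i = 0
    · simp [hPi, InformationTheory.klFun_apply]
    · rw [InformationTheory.klFun_apply, Real.log_div hPi hQi]
      field_simp
      ring
  have hterm_nonneg : ∀ i ∈ univ, 0 ≤ Q i * InformationTheory.klFun (P i / Q i) := fun i _ =>
    mul_nonneg (hQ i) (InformationTheory.klFun_nonneg (div_nonneg (hP i) (hQ i)))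
  have hterm_sum : ∑ i, Q i * InformationTheory.klFun (P i / Q i) = 0 := by
    refine le_antisymm ?_ (sum_nonneg hterm_nonneg)
    simp only [hterm, sum_add_distrib, sum_sub_distrib]
    linarith
  funext i
  rcases mul_eq_zero.1 ((sum_eq_zero_iff_of_nonneg hterm_nonneg).1 hterm_sum i (mem_univ i))
    with hQi | hkl
  · rw [hQi, hPQ i hQi]
  · exact eq_of_div_eq_one
      ((InformationTheory.klFun_eq_zero_iff (div_nonneg (hP i) (hQ i))).1 hkl)

variable {Ω S T U : Type} [Fintype Ω] [DecidableEq S] [DecidableEq T] [DecidableEq U]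
  {p : Ω → ℝ}

/-- The law of `(Z, X, Y)` under the coupling that keeps the laws of `(X, Z)` and `(Y, Z)` and makes
`X` and `Y` conditionally independent given `Z`. Where `Z` has probability `0`, so do `(X, Z)` and
`(Y, Z)`, and the value `0 / 0 = 0` is the intended one. -/
noncomputable def condIndepPr (p : Ω → ℝ) (X : Ω → S) (Y : Ω → T) (Z : Ω → U) (v : U × S × T) : ℝ :=
  pr p (fun ω => (X ω, Z ω)) (v.2.1, v.1) * pr p (fun ω => (Y ω, Z ω)) (v.2.2, v.1) / pr p Z v.1

theorem condIndepPr_nonneg (hp : ∀ ω, 0 ≤ p ω) (X : Ω → S) (Y : Ω → T) (Z : Ω → U)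
    (v : U × S × T) : 0 ≤ condIndepPr p X Y Z v :=
  div_nonneg (mul_nonneg (pr_nonneg hp _ _) (pr_nonneg hp _ _)) (pr_nonneg hp _ _)

theorem condIndepPr_pos (hp : ∀ ω, 0 ≤ p ω) (X : Ω → S) (Y : Ω → T) (Z : Ω → U) {ω : Ω}
    (hω : 0 < p ω) : 0 < condIndepPr p X Y Z (Z ω, X ω, Y ω) :=
  div_pos (mul_pos (pr_pos hp (fun ω => (X ω, Z ω)) hω) (pr_pos hp (fun ω => (Y ω, Z ω)) hω))
    (pr_pos hp Z hω)

theorem sum_condIndepPr [Fintype S] [Fintype T] [Fintype U] (X : Ω → S) (Y : Ω → T) (Z : Ω → U) :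
    ∑ v, condIndepPr p X Y Z v = ∑ ω, p ω := by
  simp only [condIndepPr, Fintype.sum_prod_type, ← sum_div, ← sum_mul_sum, sum_pr_prodMk,
    mul_self_div_self]
  exact sum_pr fun ω => mem_univ (Z ω)

theorem sum_mul_logb_condIndepPr (hp : ∀ ω, 0 ≤ p ω) (X : Ω → S) (Y : Ω → T) (Z : Ω → U) :
    ∑ ω, p ω * Real.logb 2 (condIndepPr p X Y Z (Z ω, X ω, Y ω)) =
      ent p Z - ent p (fun ω => (X ω, Z ω)) - ent p fun ω => (Y ω, Z ω) := by
  simp only [ent_eq_neg_sum, sub_neg_eq_add, neg_add_eq_sub, ← sum_sub_distrib, ← sum_add_distrib]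
  refine sum_congr rfl fun ω _ => ?_
  rcases (hp ω).eq_or_lt with hω | hω
  · simp only [← hω, zero_mul, add_zero, sub_zero]
  · have hXZ := (pr_pos hp (fun ω => (X ω, Z ω)) hω).ne'
    have hYZ := (pr_pos hp (fun ω => (Y ω, Z ω)) hω).ne'
    rw [condIndepPr, Real.logb_div (mul_ne_zero hXZ hYZ) (pr_pos hp Z hω).ne',
      Real.logb_mul hXZ hYZ]
    ring

/-- Equality in the submodularity of entropy is conditional independence: it forces the relative
entropy of the law of `(Z, X, Y)` with respect to `condIndepPr p X Y Z` to vanish. -/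
theorem pr_eq_condIndepPr_of_ent_add_ent_eq [Finite S] [Finite T] [Finite U] (hp : ∀ ω, 0 ≤ p ω)
    {X : Ω → S} {Y : Ω → T} {Z : Ω → U}
    (h : ent p (fun ω => (X ω, Z ω)) + ent p (fun ω => (Y ω, Z ω)) =
      ent p (fun ω => (Z ω, X ω, Y ω)) + ent p Z) :
    pr p (fun ω => (Z ω, X ω, Y ω)) = condIndepPr p X Y Z := by
  cases nonempty_fintype S
  cases nonempty_fintype T
  cases nonempty_fintype U
  set W : Ω → U × S × T := fun ω => (Z ω, X ω, Y ω)
  refine eq_of_sum_mul_logb_le one_lt_two (pr_nonneg hp W) (condIndepPr_nonneg hp X Y Z)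
    (fun v hv => ?_) ((sum_condIndepPr X Y Z).trans (sum_pr fun ω => mem_univ (W ω)).symm).le
    (le_of_eq ?_)
  · refine le_antisymm (not_lt.1 fun hpos => ?_) (pr_nonneg hp W v)
    obtain ⟨ω, hω, rfl⟩ := exists_pos_of_pr_pos hpos
    exact (condIndepPr_pos hp X Y Z hω).ne' hv
  · rw [sum_pr_mul (fun ω => mem_univ (W ω)) fun v => Real.logb 2 (pr p W v),
      sum_pr_mul (fun ω => mem_univ (W ω)) fun v => Real.logb 2 (condIndepPr p X Y Z v),
      sum_mul_logb_condIndepPr hp, ← neg_eq_iff_eq_neg.2 (ent_eq_neg_sum p W)]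
    linarith

theorem pr_mul_pr_eq_of_ent_add_ent_eq [Finite S] [Finite T] [Finite U] (hp : ∀ ω, 0 ≤ p ω)
    {X : Ω → S} {Y : Ω → T} {Z : Ω → U}
    (h : ent p (fun ω => (X ω, Z ω)) + ent p (fun ω => (Y ω, Z ω)) =
      ent p (fun ω => (Z ω, X ω, Y ω)) + ent p Z) (s : S) (t : T) (u : U) :
    pr p (fun ω => (Z ω, X ω, Y ω)) (u, s, t) * pr p Z u =
      pr p (fun ω => (X ω, Z ω)) (s, u) * pr p (fun ω => (Y ω, Z ω)) (t, u) := by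
  have hXZ : pr p Z u = 0 → pr p (fun ω => (X ω, Z ω)) (s, u) = 0 := fun hu =>
    le_antisymm (hu ▸ pr_mono hp fun ω hω => congrArg Prod.snd hω) (pr_nonneg hp _ _)
  rw [pr_eq_condIndepPr_of_ent_add_ent_eq hp h, condIndepPr]
  exact div_mul_cancel_of_imp fun hu => by rw [hXZ hu, zero_mul]

end ConditionalIndependence

section RandomVector

variable {ι : Type} {π : ι → Type}

theorem finsetRestrict_eq_iff {A : Finset ι} {x y : ∀ i, π i} :
    A.restrict x = A.restrict y ↔ ∀ i ∈ A, x i = y i := by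
  simp only [funext_iff, Finset.restrict, Subtype.forall]

variable [Fintype ι] [DecidableEq ι] [∀ i, Fintype (π i)] [∀ i, DecidableEq (π i)]
  {p : (∀ i, π i) → ℝ} {A B C : Finset ι} {x y : ∀ i, π i}

/-- The probability that a random vector with law `p` agrees with `x` on the coordinates in `A`. -/
noncomputable def marginal (p : (∀ i, π i) → ℝ) (A : Finset ι) (x : ∀ i, π i) : ℝ :=
  pr p A.restrict (A.restrict x)

theorem marginal_congr (h : ∀ i ∈ A, x i = y i) : marginal p A x = marginal p A y := by
  rw [marginal, marginal, finsetRestrict_eq_iff.2 h]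

theorem marginal_empty (hp : p ∈ stdSimplex ℝ (∀ i, π i)) (x : ∀ i, π i) : marginal p ∅ x = 1 := by
  simp [marginal, pr, eq_iff_true_of_subsingleton, hp.2]

theorem marginal_pos (hp : ∀ x, 0 ≤ p x) (A : Finset ι) (hx : 0 < p x) : 0 < marginal p A x :=
  pr_pos hp A.restrict hx

theorem ent_restrict_empty (hp : p ∈ stdSimplex ℝ (∀ i, π i)) :
    ent p (∅ : Finset ι).restrict = 0 :=
  ent_eq_zero_of_forall_eq hp fun _ _ => Subsingleton.elim _ _

theorem marginal_eq_of_subset_of_ent_eq (hp : ∀ x, 0 ≤ p x) (hAB : A ⊆ B)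
    (h : ent p A.restrict = ent p B.restrict) (hx : 0 < p x) : marginal p A x = marginal p B x :=
  (pr_eq_pr_of_ent_eq hp (fun _ _ hB => finsetRestrict_eq_iff.2 fun i hi =>
    finsetRestrict_eq_iff.1 hB i (hAB hi)) h.symm hx).symm

theorem marginal_union_mul_marginal_inter (hp : ∀ x, 0 ≤ p x)
    (h : ent p A.restrict + ent p B.restrict =
      ent p (A ∪ B).restrict + ent p (A ∩ B).restrict) (x : ∀ i, π i) :
    marginal p (A ∪ B) x * marginal p (A ∩ B) x = marginal p A x * marginal p B x := by
  have hA (x y : ∀ i, π i) : A.restrict x = A.restrict y ↔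
      (A.restrict x, (A ∩ B).restrict x) = (A.restrict y, (A ∩ B).restrict y) := by
    simp only [Prod.mk.injEq, finsetRestrict_eq_iff, mem_inter]
    grind
  have hB (x y : ∀ i, π i) : B.restrict x = B.restrict y ↔
      (B.restrict x, (A ∩ B).restrict x) = (B.restrict y, (A ∩ B).restrict y) := by
    simp only [Prod.mk.injEq, finsetRestrict_eq_iff, mem_inter]
    grind
  have hAB (x y : ∀ i, π i) : (A ∪ B).restrict x = (A ∪ B).restrict y ↔
      ((A ∩ B).restrict x, A.restrict x, B.restrict x) =
        ((A ∩ B).restrict y, A.restrict y, B.restrict y) := by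
    simp only [Prod.mk.injEq, finsetRestrict_eq_iff, mem_inter, mem_union]
    grind
  rw [ent_congr hA, ent_congr hB, ent_congr hAB] at h
  simp only [marginal]
  rw [pr_congr fun y => hA y x, pr_congr fun y => hB y x, pr_congr fun y => hAB y x]
  exact pr_mul_pr_eq_of_ent_add_ent_eq hp h _ _ _

theorem marginal_union_of_disjoint (hp : p ∈ stdSimplex ℝ (∀ i, π i))
    (hAB : Disjoint A B) (h : ent p A.restrict + ent p B.restrict = ent p (A ∪ B).restrict)
    (x : ∀ i, π i) : marginal p (A ∪ B) x = marginal p A x * marginal p B x := by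
  have hinter : A ∩ B = ∅ := disjoint_iff_inter_eq_empty.1 hAB
  have := marginal_union_mul_marginal_inter (A := A) (B := B) hp.1
    (by rw [hinter, ent_restrict_empty hp, add_zero, h]) x
  rwa [hinter, marginal_empty hp, mul_one] at this

theorem exists_agree_of_ent_add_ent_eq (hp : p ∈ stdSimplex ℝ (∀ i, π i))
    (hAB : Disjoint A B) (h : ent p A.restrict + ent p B.restrict = ent p (A ∪ B).restrict)
    (hx : 0 < p x) (hy : 0 < p y) :
    ∃ w, 0 < p w ∧ (∀ i ∈ A, w i = x i) ∧ ∀ i ∈ B, w i = y i := by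
  set z : ∀ i, π i := A.piecewise x y
  have hzx : ∀ i ∈ A, z i = x i := fun i hi => A.piecewise_eq_of_mem x y hi
  have hzy : ∀ i ∈ B, z i = y i := fun i hi =>
    A.piecewise_eq_of_notMem x y (disjoint_right.1 hAB hi)
  have hz : 0 < marginal p (A ∪ B) z := by
    rw [marginal_union_of_disjoint hp hAB h, marginal_congr hzx, marginal_congr hzy]
    exact mul_pos (marginal_pos hp.1 A hx) (marginal_pos hp.1 B hy)
  obtain ⟨w, hw, hwz⟩ := exists_pos_of_pr_pos hz
  rw [finsetRestrict_eq_iff] at hwz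
  exact ⟨w, hw, fun i hi => (hwz i (mem_union_left B hi)).trans (hzx i hi),
    fun i hi => (hwz i (mem_union_right A hi)).trans (hzy i hi)⟩

theorem marginal_mul_marginal_inter_eq (hp : p ∈ stdSimplex ℝ (∀ i, π i))
    (hAC : Disjoint A C) (hBC : Disjoint B C)
    (hAC_ent : ent p A.restrict + ent p C.restrict = ent p (A ∪ C).restrict)
    (hBC_ent : ent p B.restrict + ent p C.restrict = ent p (B ∪ C).restrict)
    (hAB_ent : ent p A.restrict + ent p B.restrict =
      ent p (A ∪ B).restrict + ent p (A ∩ B).restrict)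
    (hAC_full : ent p (A ∪ C).restrict = ent p (A ∪ B ∪ C).restrict)
    (hBC_full : ent p (B ∪ C).restrict = ent p (A ∪ B ∪ C).restrict)
    (hAB_full : ent p (A ∪ B).restrict = ent p (A ∪ B ∪ C).restrict) (hx : 0 < p x) :
    marginal p C x * marginal p (A ∩ B) x = marginal p A x := by
  have hpA := marginal_pos hp.1 A hx
  have hpC := marginal_pos hp.1 C hx
  have hA_mul_C := marginal_union_of_disjoint hp hAC hAC_ent x
  have hB_mul_C := marginal_union_of_disjoint hp hBC hBC_ent x
  have hA_mul_B := marginal_union_mul_marginal_inter hp.1 hAB_ent x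
  rw [marginal_eq_of_subset_of_ent_eq hp.1 (by grind) hAC_full hx] at hA_mul_C
  rw [marginal_eq_of_subset_of_ent_eq hp.1 (by grind) hBC_full hx] at hB_mul_C
  rw [marginal_eq_of_subset_of_ent_eq hp.1 subset_union_left hAB_full hx, hA_mul_C] at hA_mul_B
  have hA_eq_B : marginal p A x = marginal p B x :=
    mul_right_cancel₀ hpC.ne' (hA_mul_C.symm.trans hB_mul_C)
  rw [← hA_eq_B, mul_assoc] at hA_mul_B
  exact mul_left_cancel₀ hpA.ne' hA_mul_B

theorem exists_ent_restrict_eq_logb_natCast (hp : p ∈ stdSimplex ℝ (∀ i, π i))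
    (hAC : Disjoint A C) (h : ent p A.restrict + ent p C.restrict = ent p (A ∪ C).restrict)
    (hdet : ∀ x y, 0 < p x → 0 < p y → (∀ i ∈ A, x i = y i) → marginal p C x = marginal p C y) :
    ∃ k : ℕ, 0 < k ∧ ent p C.restrict = Real.logb 2 k := by
  obtain ⟨x, -, hx⟩ : ∃ x ∈ univ, 0 < p x := exists_lt_of_sum_lt (by simp [hp.2])
  refine exists_ent_eq_logb_natCast hp (c := marginal p C x) fun y hy => ?_
  obtain ⟨w, hw, hwx, hwy⟩ := exists_agree_of_ent_add_ent_eq hp hAC h hx hy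
  exact (marginal_congr hwy).symm.trans (hdet w x hw hx hwx)

end RandomVector

theorem exists_eq_logb_of_isEntropic {a b : ℝ}
    (h : IsEntropic 4 fun A => a * rkU 2 {0, 1, 2} A + b * rkU 1 {0, 1, 3} A) :
    ∃ k : ℕ, 0 < k ∧ a = Real.logb 2 k := by
  obtain ⟨m, p, hp_nonneg, hp_sum, hp⟩ := h
  have hp_mem : p ∈ stdSimplex ℝ (∀ i, Fin (m i)) := ⟨hp_nonneg, hp_sum⟩
  have hent (A : Finset (Fin 4)) (r s : ℕ) (hr : min 2 #(A ∩ {0, 1, 2}) = r)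
      (hs : min 1 #(A ∩ {0, 1, 3}) = s) : ent p A.restrict = a * r + b * s := by
    refine (hp A).symm.trans ?_
    simp [rkU, ← hr, ← hs]
  have h2 := hent {2} 1 0 rfl rfl
  have h3 := hent ({0, 3} ∩ {1, 3}) 0 1 rfl rfl
  have h03 := hent {0, 3} 1 1 rfl rfl
  have h13 := hent {1, 3} 1 1 rfl rfl
  have h032 := hent ({0, 3} ∪ {2}) 2 1 rfl rfl
  have h132 := hent ({1, 3} ∪ {2}) 2 1 rfl rfl
  have h031 := hent ({0, 3} ∪ {1, 3}) 2 1 rfl rfl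
  have h_full := hent ({0, 3} ∪ {1, 3} ∪ {2}) 2 1 rfl rfl
  push_cast at h2 h3 h03 h13 h032 h132 h031 h_full
  have key {x : ∀ i, Fin (m i)} (hx : 0 < p x) :
      marginal p {2} x * marginal p ({0, 3} ∩ {1, 3}) x = marginal p {0, 3} x :=
    marginal_mul_marginal_inter_eq hp_mem (by decide) (by decide) (by linarith) (by linarith)
      (by linarith) (by linarith) (by linarith) (by linarith) hx
  obtain ⟨k, hk, h⟩ := exists_ent_restrict_eq_logb_natCast (A := {0, 3}) (C := {2}) hp_mem
    (by decide) (by linarith) fun x y hx hy hxy => by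
      have hxy3 : ∀ i ∈ ({0, 3} ∩ {1, 3} : Finset (Fin 4)), x i = y i := fun i hi =>
        hxy i (mem_of_mem_inter_left hi)
      have hkey := key hx
      rw [marginal_congr hxy, marginal_congr hxy3, ← key hy] at hkey
      exact mul_right_cancel₀ (marginal_pos hp_nonneg _ hy).ne' hkey
  exact ⟨k, hk, by linarith⟩

section Construction

theorem prod_mem_stdSimplex {Ω Ω' : Type*} [Fintype Ω] [Fintype Ω'] {p : Ω → ℝ} {q : Ω' → ℝ}
    (hp : p ∈ stdSimplex ℝ Ω) (hq : q ∈ stdSimplex ℝ Ω') :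
    (fun ω : Ω × Ω' => p ω.1 * q ω.2) ∈ stdSimplex ℝ (Ω × Ω') :=
  ⟨fun ω => mul_nonneg (hp.1 ω.1) (hq.1 ω.2), by
    rw [Fintype.sum_prod_type, ← sum_mul_sum, hp.2, hq.2, one_mul]⟩

theorem uniform_mem_stdSimplex {Ω : Type*} [Fintype Ω] [Nonempty Ω] :
    (fun _ : Ω => (Fintype.card Ω : ℝ)⁻¹) ∈ stdSimplex ℝ Ω :=
  ⟨fun _ => by positivity, by simp⟩

variable {Ω Ω' S S' : Type} [Fintype Ω] [Fintype Ω'] [DecidableEq S] [DecidableEq S']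

theorem pr_prod (p : Ω → ℝ) (q : Ω' → ℝ) (Y : Ω → S) (Z : Ω' → S') (s : S) (t : S') :
    pr (fun ω : Ω × Ω' => p ω.1 * q ω.2) (fun ω => (Y ω.1, Z ω.2)) (s, t) =
      pr p Y s * pr q Z t := by
  simp only [pr, Fintype.sum_prod_type, sum_mul_sum, Prod.mk.injEq, ite_zero_mul_ite_zero]

theorem ent_prod [Finite S] [Finite S'] {p : Ω → ℝ} {q : Ω' → ℝ} (hp : p ∈ stdSimplex ℝ Ω)
    (hq : q ∈ stdSimplex ℝ Ω') (Y : Ω → S) (Z : Ω' → S') :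
    ent (fun ω : Ω × Ω' => p ω.1 * q ω.2) (fun ω => (Y ω.1, Z ω.2)) = ent p Y + ent q Z := by
  cases nonempty_fintype S
  cases nonempty_fintype S'
  simp only [ent_eq_sum_negMulLog, Fintype.sum_prod_type, pr_prod, Real.negMulLog_mul,
    sum_add_distrib, ← sum_mul, ← mul_sum, (pr_mem_stdSimplex hp Y).2, (pr_mem_stdSimplex hq Z).2,
    one_mul, add_div]

theorem isEntropic_ent {n : ℕ} {T : Fin n → Type} [∀ i, Finite (T i)] [∀ i, DecidableEq (T i)]
    {p : Ω → ℝ} (hp : p ∈ stdSimplex ℝ Ω) (X : ∀ i, Ω → T i) :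
    IsEntropic n fun A => ent p fun ω (i : A) => X i ω := by
  have (i : Fin n) : Fintype (T i) := Fintype.ofFinite (T i)
  have hmem := pr_mem_stdSimplex hp fun ω i => Fintype.equivFin (T i) (X i ω)
  refine ⟨fun i => Fintype.card (T i), _, hmem.1, hmem.2, fun A => ?_⟩
  rw [ent_pr]
  exact ent_congr fun ω ω' => by simp [funext_iff]

theorem isEntropic_ent_inter {n : ℕ} {T : Type} [Finite T] [DecidableEq T] {p : Ω → ℝ}
    (hp : p ∈ stdSimplex ℝ Ω) (X : Fin n → Ω → T) (B : Finset (Fin n)) :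
    IsEntropic n fun A => ent p fun ω (i : ↥(A ∩ B)) => X i ω := by
  convert isEntropic_ent hp (fun i ω => if i ∈ B then some (X i ω) else none) using 2 with A
  refine ent_congr fun ω ω' => ?_
  simp only [funext_iff, Subtype.forall, mem_inter]
  refine forall_congr' fun i => ?_
  by_cases hi : i ∈ B <;> simp [hi]

theorem IsEntropic.add {n : ℕ} {g h : Finset (Fin n) → ℝ} (hg : IsEntropic n g)
    (hh : IsEntropic n h) : IsEntropic n fun A => g A + h A := by
  obtain ⟨l, p, hp_nonneg, hp_sum, hp⟩ := hg
  obtain ⟨m, q, hq_nonneg, hq_sum, hq⟩ := hh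
  have hp_mem : p ∈ stdSimplex ℝ (∀ i, Fin (l i)) := ⟨hp_nonneg, hp_sum⟩
  have hq_mem : q ∈ stdSimplex ℝ (∀ i, Fin (m i)) := ⟨hq_nonneg, hq_sum⟩
  convert isEntropic_ent (prod_mem_stdSimplex hp_mem hq_mem)
    (fun i ω => (ω.1 i, ω.2 i)) using 2 with A
  rw [hp, hq, ← ent_prod hp_mem hq_mem]
  exact ent_congr fun ω ω' => by simp [funext_iff, forall_and]

theorem exists_ent_id_eq {b : ℝ} (hb : 0 ≤ b) :
    ∃ (N : ℕ) (p : Fin N → ℝ), p ∈ stdSimplex ℝ (Fin N) ∧ ent p id = b := by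
  obtain ⟨M, hM⟩ := exists_nat_ge ((2 : ℝ) ^ b)
  have pr_id (p : Fin (M + 1) → ℝ) (i : Fin (M + 1)) : pr p id i = p i := by simp [pr]
  have hcont : Continuous fun p : Fin (M + 1) → ℝ => ent p id := by
    simp only [ent_eq_sum_negMulLog, pr_id]
    exact (continuous_finsetSum _ fun i _ =>
      Real.continuous_negMulLog.comp (continuous_apply i)).div_const _
  have hpoint : ent (Pi.single (0 : Fin (M + 1)) (1 : ℝ)) id = 0 := by
    rw [ent_eq_neg_logb (c := 1) (single_mem_stdSimplex ℝ _), Real.logb_one, neg_zero]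
    intro i hi
    rw [pr_id]
    by_contra hne
    simp_all [Pi.single_apply]
  have huniform : ent (fun _ : Fin (M + 1) => (Fintype.card (Fin (M + 1)) : ℝ)⁻¹) id =
      Real.logb 2 (M + 1) := by
    rw [ent_eq_neg_logb uniform_mem_stdSimplex fun i _ => pr_id _ _, Real.logb_inv, neg_neg]
    simp
  have hb_le : b ≤ Real.logb 2 (M + 1) := by
    rw [Real.le_logb_iff_rpow_le one_lt_two (by positivity)]
    linarith
  obtain ⟨p, hp, hpb⟩ := (convex_stdSimplex ℝ (Fin (M + 1))).isPreconnected.intermediate_value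
    (single_mem_stdSimplex ℝ 0) uniform_mem_stdSimplex hcont.continuousOn
    ⟨hpoint.trans_le hb, hb_le.trans_eq huniform.symm⟩
  exact ⟨M + 1, p, hp, hpb⟩

theorem isEntropic_mul_rkU_one {b : ℝ} (hb : 0 ≤ b) (B : Finset (Fin 4)) :
    IsEntropic 4 fun A => b * rkU 1 B A := by
  obtain ⟨N, p, hp, hpb⟩ := exists_ent_id_eq hb
  convert isEntropic_ent_inter hp (fun _ => id) B using 2 with A
  rcases (A ∩ B).eq_empty_or_nonempty with hAB | hAB
  · rw [ent_eq_zero_of_forall_eq hp fun ω ω' => by simp [funext_iff, hAB]]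
    simp [rkU, hAB]
  · have hcard : (1 : ℝ) ≤ #(A ∩ B) := by exact_mod_cast hAB.card_pos
    rw [rkU, Nat.cast_one, min_eq_left hcard, mul_one, ← hpb]
    obtain ⟨i, hi⟩ := hAB
    exact ent_congr fun ω ω' => ⟨fun h => funext fun _ => h, fun h => congrFun h ⟨i, hi⟩⟩

theorem pr_uniform_eq_of_injective_prodMk {T : Type} [Fintype T] [Nonempty T] [DecidableEq T]
    (hcard : Fintype.card Ω = Fintype.card T ^ 2) {Y Z : Ω → T}
    (h : Function.Injective fun ω => (Y ω, Z ω)) (t : T) :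
    pr (fun _ => (Fintype.card Ω : ℝ)⁻¹) Y t = (Fintype.card T : ℝ)⁻¹ := by
  have hbij : Function.Bijective fun ω => (Y ω, Z ω) :=
    (Fintype.bijective_iff_injective_and_card _).2 ⟨h, by rw [hcard, Fintype.card_prod, sq]⟩
  rw [pr, hbij.sum_comp fun v : T × T => if v.1 = t then (Fintype.card Ω : ℝ)⁻¹ else 0]
  simp [Fintype.sum_prod_type_right, hcard, sq]

theorem isEntropic_logb_card_mul_rkU_two {T : Type} [Fintype T] [Nonempty T]
    (hcard : Fintype.card Ω = Fintype.card T ^ 2) {X : Fin 4 → Ω → T} {B : Finset (Fin 4)}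
    (hB : 1 < #B)
    (hX : ∀ i ∈ B, ∀ j ∈ B, i ≠ j → Function.Injective fun ω => (X i ω, X j ω)) :
    IsEntropic 4 fun A => Real.logb 2 (Fintype.card T) * rkU 2 B A := by
  classical
  have : Nonempty Ω := Fintype.card_pos_iff.1 (hcard ▸ pow_pos Fintype.card_pos 2)
  have hunif := uniform_mem_stdSimplex (Ω := Ω)
  convert isEntropic_ent_inter hunif X B using 2 with A
  rcases (#(A ∩ B)).lt_trichotomy 1 with hlt | heq | hgt
  · have hAB : A ∩ B = ∅ := card_eq_zero.1 (Nat.lt_one_iff.1 hlt)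
    rw [ent_eq_zero_of_forall_eq hunif fun ω ω' => by simp [funext_iff, hAB]]
    simp [rkU, hAB]
  · obtain ⟨i, hi⟩ := card_eq_one.1 heq
    have hiB : i ∈ B := mem_of_mem_inter_right (hi ▸ mem_singleton_self i)
    obtain ⟨j, hjB, hji⟩ := exists_mem_ne hB i
    have hpr := pr_uniform_eq_of_injective_prodMk hcard (hX i hiB j hjB hji.symm)
    rw [ent_congr (Z := X i) fun ω ω' => by simp [funext_iff, hi],
      ent_eq_neg_logb hunif fun ω _ => hpr (X i ω), Real.logb_inv, neg_neg]
    simp [rkU, heq]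
  · obtain ⟨i, hi, j, hj, hij⟩ := one_lt_card.1 hgt
    have hinj := hX i (mem_of_mem_inter_right hi) j (mem_of_mem_inter_right hj) hij
    have hid (ω ω' : Ω) : ((fun l : ↥(A ∩ B) => X l ω) = fun l : ↥(A ∩ B) => X l ω') ↔
        id ω = id ω' :=
      ⟨fun h => hinj (Prod.ext (congrFun h ⟨i, hi⟩) (congrFun h ⟨j, hj⟩)), fun h => by
        rw [id_eq, id_eq] at h
        rw [h]⟩
    have hrank : rkU 2 B A = 2 := min_eq_left (by exact_mod_cast hgt)
    rw [ent_congr hid, ent_eq_neg_logb hunif (c := (Fintype.card Ω : ℝ)⁻¹) fun ω _ => by simp [pr],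
      Real.logb_inv, neg_neg, hcard, Nat.cast_pow, Real.logb_pow, hrank, mul_comm, Nat.cast_ofNat]

end Construction

theorem isEntropic_logb_mul_rkU_two {k : ℕ} (hk : 0 < k) :
    IsEntropic 4 fun A => Real.logb 2 k * rkU 2 {0, 1, 2} A := by
  have : NeZero k := ⟨hk.ne'⟩
  have := isEntropic_logb_card_mul_rkU_two (Ω := ZMod k × ZMod k) (T := ZMod k) (B := {0, 1, 2})
    (X := ![Prod.fst, Prod.snd, fun w => w.1 + w.2, 0])
    (by rw [Fintype.card_prod, sq]) (by decide) (by
      simp only [mem_insert, mem_singleton]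
      rintro i (rfl | rfl | rfl) j (rfl | rfl | rfl) hij ⟨u, v⟩ ⟨u', v'⟩ h <;> simp_all <;> grind)
  simpa only [ZMod.card] using this

/-- Theorem 4: for the face (U^{123}_{2,3}, U^{124}_{1,3}),
h = a·r₁ + b·r₂ (a, b ≥ 0) is entropic iff a = log₂ k for a positive integer k. -/
theorem face_U123_23_U124_13 (a b : ℝ) (ha : 0 ≤ a) (hb : 0 ≤ b) :
    IsEntropic 4
      (fun A => a * rkU 2 ({0,1,2} : Finset (Fin 4)) A +
                b * rkU 1 ({0,1,3} : Finset (Fin 4)) A)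
    ↔ ∃ k : ℕ, 0 < k ∧ a = Real.logb 2 k := by
  constructor
  · exact exists_eq_logb_of_isEntropic
  · rintro ⟨k, hk, rfl⟩
    exact (isEntropic_logb_mul_rkU_two hk).add (isEntropic_mul_rkU_one hb {0, 1, 3})
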